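/- arXiv:2204.11401 — 10 statements merged into one kernel-verified Lean document; each statement's English description precedes it below -/
import Mathlib

section
/- The derivative R_b' has exactly two real zeros c₁ and c₂; the critical point c₁ lies in E_1^0 = (1/(b+1), b/(b+1)) and c₂ lies in E_1^1 = ((b+2)/(b+1), (2b+1)/(b+1)); moreover the critical values lie outside [0,2]: R_b(c₁) > 2 and R_b(c₂) < 0. -/
open Set

/-- The spectral decimation function `R_b`. -/
noncomputable def Rb (b : ℕ) : ℝ → ℝ :=
  fun z => (z / (b : ℝ)) * (((b : ℝ) + 1) * z - (2 * (b : ℝ) + 1)) *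
    (((b : ℝ) + 1) * z - ((b : ℝ) + 2))

/-- The derivative of `R_b` has exactly two real zeros `c₁`, `c₂`; the critical point
`c₁` lies in `E₁⁰ = (1/(b+1), b/(b+1))` and `c₂` lies in
`E₁¹ = ((b+2)/(b+1), (2b+1)/(b+1))`; moreover the critical values lie outside `[0,2]`:
`R_b(c₁) > 2` and `R_b(c₂) < 0`. -/
theorem critical_points_of_Rb (b : ℕ) (hb : 2 ≤ b) :
    ∃ c₁ c₂ : ℝ, c₁ ≠ c₂ ∧
      {x : ℝ | deriv (Rb b) x = 0} = {c₁, c₂} ∧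
      c₁ ∈ Ioo (1 / ((b : ℝ) + 1)) ((b : ℝ) / ((b : ℝ) + 1)) ∧
      c₂ ∈ Ioo (((b : ℝ) + 2) / ((b : ℝ) + 1)) ((2 * (b : ℝ) + 1) / ((b : ℝ) + 1)) ∧
      2 < Rb b c₁ ∧ Rb b c₂ < 0 := by
  have hB : (2 : ℝ) ≤ (b : ℝ) := by exact_mod_cast hb
  have hR : Rb b = fun z : ℝ => (z / (b : ℝ)) * (((b : ℝ) + 1) * z - (2 * (b : ℝ) + 1)) *
    (((b : ℝ) + 1) * z - ((b : ℝ) + 2)) := rfl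
  rw [hR]
  generalize (b : ℝ) = B at hB
  clear hR hb
  obtain ⟨s, hs1, hsB, hs⟩ : ∃ s : ℝ, 1 < s ∧ s < B ∧ 3 * s ^ 2 = B ^ 2 + B + 1 := by
    have h0 : (0 : ℝ) ≤ (B ^ 2 + B + 1) / 3 := by positivity
    refine ⟨Real.sqrt ((B ^ 2 + B + 1) / 3), ?_, ?_, ?_⟩
    · rw [Real.lt_sqrt (by norm_num)]; nlinarith
    · rw [Real.sqrt_lt' (by linarith)]; nlinarith
    · rw [Real.sq_sqrt h0]; ring
  have hb0 : 0 < B := by linarith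
  have hb1 : 0 < B + 1 := by linarith
  have hder : ∀ x : ℝ, deriv (fun z : ℝ => (z / B) * ((B + 1) * z - (2 * B + 1)) *
      ((B + 1) * z - (B + 2))) x
      = 3 / B * (((B + 1) * x - (B + 1 - s)) * ((B + 1) * x - (B + 1 + s))) := by
    intro x
    have hl : ∀ k : ℝ, HasDerivAt (fun z : ℝ => (B + 1) * z - k) ((B + 1) * 1) x := fun k =>
      ((hasDerivAt_id' x).const_mul (B + 1)).sub_const k
    have h := ((((hasDerivAt_id' x).div_const B).mul (hl (2 * B + 1))).mul (hl (B + 2)))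
    refine h.deriv.trans ?_
    simp only [Pi.mul_apply]
    field_simp
    linear_combination hs
  have e1 : (B + 1) * ((B + 1 - s) / (B + 1)) = B + 1 - s := by field_simp
  have e2 : (B + 1) * ((B + 1 + s) / (B + 1)) = B + 1 + s := by field_simp
  refine ⟨(B + 1 - s) / (B + 1), (B + 1 + s) / (B + 1), ?_, ?_, ⟨?_, ?_⟩, ⟨?_, ?_⟩, ?_, ?_⟩
  · intro h
    rw [h] at e1
    linarith
  · ext x
    have h3 : 3 / B ≠ 0 := by positivity
    simp only [mem_ofPred_eq, hder, mem_insert_iff, mem_singleton_iff, mul_eq_zero, h3, false_or,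
      sub_eq_zero, eq_div_iff hb1.ne', mul_comm x]
  · exact div_lt_div_of_pos_right (by linarith) hb1
  · exact div_lt_div_of_pos_right (by linarith) hb1
  · exact div_lt_div_of_pos_right (by linarith) hb1
  · exact div_lt_div_of_pos_right (by linarith) hb1
  · simp only [e1]
    have key : (B + 1 - s) / (B + 1) / B * (B + 1 - s - (2 * B + 1)) * (B + 1 - s - (B + 2)) - 2
        = (B - s) * (s - 1) * (B + 1 + s) / (B * (B + 1)) := by
      field_simp
      ring
    have : 0 < (B - s) * (s - 1) * (B + 1 + s) / (B * (B + 1)) := by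
      have := sub_pos.2 hs1
      have := sub_pos.2 hsB
      positivity
    linarith
  · simp only [e2]
    have h1 : 0 < (B + 1 + s) / (B + 1) / B := by positivity
    have h2 : B + 1 + s - (2 * B + 1) < 0 := by linarith
    have h3 : 0 < B + 1 + s - (B + 2) := by linarith
    exact mul_neg_of_neg_of_pos (mul_neg_of_pos_of_neg h1 h2) h3
end

section
/- For every y ∈ [0,2], the set {x ∈ ℝ : R_b(x) = y} has exactly three elements, and all three elements lie in [0,2]. -/
open Set

/-- A cubic taking the same value at three distinct points takes it nowhere else. -/
lemma cubic_aux (p q r y u v w x : ℝ) (hp : p ≠ 0)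
    (hu : p * u ^ 3 + q * u ^ 2 + r * u = y) (hv : p * v ^ 3 + q * v ^ 2 + r * v = y)
    (hw : p * w ^ 3 + q * w ^ 2 + r * w = y) (hx : p * x ^ 3 + q * x ^ 2 + r * x = y)
    (huv : u ≠ v) (huw : u ≠ w) (hvw : v ≠ w) : x = u ∨ x = v ∨ x = w := by
  by_contra! h
  obtain ⟨h1, h2, h3⟩ := h
  have e : ∀ t, t ≠ u → p * t ^ 3 + q * t ^ 2 + r * t = y →
      p * (u ^ 2 + u * t + t ^ 2) + q * (u + t) + r = 0 := by
    intro t ht h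
    apply mul_left_cancel₀ (sub_ne_zero.2 ht)
    linear_combination h - hu
  have f : ∀ t, t ≠ u → t ≠ v → p * t ^ 3 + q * t ^ 2 + r * t = y →
      p * (u + v + t) + q = 0 := by
    intro t ht ht' h
    apply mul_left_cancel₀ (sub_ne_zero.2 ht')
    linear_combination e t ht h - e v huv.symm hv
  have g : p * (x - w) = 0 := by
    linear_combination f x h1 h2 hx - f w huw.symm hvw.symm hw
  rcases mul_eq_zero.1 g with g | g
  · exact hp g
  · exact h3 (sub_eq_zero.1 g)

/-- For every `y ∈ [0,2]`, the set of real preimages `{x : R_b(x) = y}` has exactly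
three elements, all of which lie in `[0,2]`. -/
theorem three_preimages_in_interval (b : ℕ) (hb : 2 ≤ b) :
    ∀ y ∈ Icc (0 : ℝ) 2,
      {x : ℝ | Rb b x = y}.ncard = 3 ∧ {x : ℝ | Rb b x = y} ⊆ Icc (0 : ℝ) 2 := by
  intro y hy
  have hB : (2 : ℝ) ≤ b := by exact_mod_cast hb
  have hb0 : (b : ℝ) ≠ 0 := by positivity
  have hb1 : (b : ℝ) + 1 ≠ 0 := by positivity
  have hpos : (0 : ℝ) < (b : ℝ) + 1 := by positivity
  have hc : Continuous (Rb b) := by unfold Rb; fun_prop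
  have r0 : Rb b 0 = 0 := by simp [Rb]
  have r1 : Rb b (1 / ((b : ℝ) + 1)) = 2 := by unfold Rb; field_simp; ring
  have r2 : Rb b ((b : ℝ) / (b + 1)) = 2 := by unfold Rb; field_simp; ring
  have r3 : Rb b (((b : ℝ) + 2) / (b + 1)) = 0 := by unfold Rb; field_simp; ring
  have r4 : Rb b ((2 * (b : ℝ) + 1) / (b + 1)) = 0 := by unfold Rb; field_simp; ring
  have r5 : Rb b 2 = 2 := by unfold Rb; field_simp; ring
  have l0 : 0 ≤ 1 / ((b : ℝ) + 1) := by positivity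
  have l1 : 1 / ((b : ℝ) + 1) < (b : ℝ) / (b + 1) := by gcongr; linarith
  have l2 : (b : ℝ) / (b + 1) ≤ ((b : ℝ) + 2) / (b + 1) := by gcongr; linarith
  have l3 : ((b : ℝ) + 2) / (b + 1) < (2 * (b : ℝ) + 1) / (b + 1) := by gcongr 1; linarith
  have l4 : (2 * (b : ℝ) + 1) / (b + 1) ≤ 2 := by rw [div_le_iff₀ hpos]; linarith
  obtain ⟨u, hu, hu'⟩ := intermediate_value_Icc l0 hc.continuousOn (by rw [r0, r1]; exact hy)
  obtain ⟨v, hv, hv'⟩ := intermediate_value_Icc' l2 hc.continuousOn (by rw [r3, r2]; exact hy)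
  obtain ⟨w, hw, hw'⟩ := intermediate_value_Icc l4 hc.continuousOn (by rw [r4, r5]; exact hy)
  have huv : u < v := by linarith [hu.2, hv.1]
  have hvw : v < w := by linarith [hv.2, hw.1]
  have key : ∀ x, Rb b x = y → ((b : ℝ) + 1) ^ 2 * x ^ 3 + (-3 * ((b : ℝ) + 1) ^ 2) * x ^ 2
      + ((2 * (b : ℝ) + 1) * (b + 2)) * x = b * y := by
    intro x hx
    rw [← hx]; unfold Rb; field_simp; ring
  have hset : {x : ℝ | Rb b x = y} = {u, v, w} := by
    ext x
    simp only [mem_setOf_eq, mem_insert_iff, mem_singleton_iff]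
    constructor
    · intro hx
      exact cubic_aux _ _ _ _ u v w x (by positivity) (key u hu') (key v hv') (key w hw')
        (key x hx) huv.ne (huv.trans hvw).ne hvw.ne
    · rintro (rfl | rfl | rfl) <;> assumption
  rw [hset]
  constructor
  · rw [Set.ncard_eq_three]
    exact ⟨u, v, w, huv.ne, (huv.trans hvw).ne, hvw.ne, rfl⟩
  · rintro x (rfl | rfl | rfl)
    · exact ⟨hu.1, by linarith [hw.2]⟩
    · exact ⟨by linarith [hu.1], by linarith [hw.2]⟩
    · exact ⟨by linarith [hu.1], hw.2⟩
end

section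
/- The spectrum of the matrix Δ_{1,b} (i.e., its set of real eigenvalues) is exactly {0, b/(b+1), (b+2)/(b+1), 2}. -/
open Matrix

/-- The level-1 probabilistic graph Laplacian of the bubble-diamond graph, boundary
vertices listed first. -/
noncomputable def Delta1 (b : ℕ) : Matrix (Fin 4) (Fin 4) ℝ :=
  (1 / ((b : ℝ) + 1)) •
    !![(b : ℝ) + 1, 0, -((b : ℝ) + 1), 0;
       0, (b : ℝ) + 1, 0, -((b : ℝ) + 1);
       -1, 0, (b : ℝ) + 1, -(b : ℝ);
       0, -1, -(b : ℝ), (b : ℝ) + 1]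

/-- The characteristic polynomial of the Laplacian, in factored form. -/
lemma Delta1_det (b : ℕ) (x : ℝ) :
    (algebraMap ℝ (Matrix (Fin 4) (Fin 4) ℝ) x - Delta1 b).det =
      x * (x - (b : ℝ) / ((b : ℝ) + 1)) * (x - ((b : ℝ) + 2) / ((b : ℝ) + 1)) * (x - 2) := by
  have h : (b : ℝ) + 1 ≠ 0 := by positivity
  have e : algebraMap ℝ (Matrix (Fin 4) (Fin 4) ℝ) x - Delta1 b =
      !![x - 1, 0, 1, 0;
         0, x - 1, 0, 1;
         1 / ((b : ℝ) + 1), 0, x - 1, (b : ℝ) / ((b : ℝ) + 1);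
         0, 1 / ((b : ℝ) + 1), (b : ℝ) / ((b : ℝ) + 1), x - 1] := by
    ext i j
    fin_cases i <;> fin_cases j <;>
      simp [Delta1, Matrix.algebraMap_matrix_apply] <;> field_simp <;> ring
  rw [e]
  simp [Matrix.det_succ_row_zero, Fin.sum_univ_succ, Fin.succAbove]
  field_simp
  ring

/-- The spectrum of `Δ_{1,b}` (its set of real eigenvalues) is exactly
`{0, b/(b+1), (b+2)/(b+1), 2}`. -/
theorem spectrum_of_level_one_laplacian (b : ℕ) (hb : 2 ≤ b) :
    spectrum ℝ (Delta1 b) =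
      {0, (b : ℝ) / ((b : ℝ) + 1), ((b : ℝ) + 2) / ((b : ℝ) + 1), 2} := by
  ext x
  rw [spectrum.mem_iff, Matrix.isUnit_iff_isUnit_det, Delta1_det, isUnit_iff_ne_zero, not_not]
  simp only [mul_eq_zero, sub_eq_zero, Set.mem_insert_iff, Set.mem_singleton_iff, or_assoc]
end

section
/- For all integers m, n ≥ 0 with m ≠ n, the sets P_m and P_n are disjoint; that is, no real number x satisfies both R_b^∘m(x) ∈ E_b and R_b^∘n(x) ∈ E_b. -/
open Set

/-- The exceptional set `E_b = {1/(b+1), (2b+1)/(b+1)}`. -/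
noncomputable def Eb (b : ℕ) : Set ℝ :=
  {1 / ((b : ℝ) + 1), (2 * (b : ℝ) + 1) / ((b : ℝ) + 1)}

/-- The `m`-th preimage set `P_m = {x : R_b^∘m(x) ∈ E_b}`. -/
noncomputable def Pm (b m : ℕ) : Set ℝ := {x : ℝ | (Rb b)^[m] x ∈ Eb b}

theorem Rb_iter_Eb_not_mem (b : ℕ) (hb : 2 ≤ b) (y : ℝ) (hy : y ∈ Eb b) (k : ℕ) :
    (Rb b)^[k + 1] y ∉ Eb b := by
  have hb' : (2 : ℝ) ≤ (b : ℝ) := by exact_mod_cast hb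
  have h0 : (b : ℝ) ≠ 0 := by positivity
  have h1 : (b : ℝ) + 1 ≠ 0 := by positivity
  have f2 : Rb b 2 = 2 := by
    unfold Rb
    field_simp
    ring
  have f0 : Rb b 0 = 0 := by simp [Rb]
  have hR : Rb b y = 2 ∨ Rb b y = 0 := by
    rcases hy with rfl | hy
    · left
      unfold Rb
      field_simp
      ring
    · right
      rw [Set.mem_singleton_iff] at hy
      subst hy
      unfold Rb
      field_simp
      ring
  rw [Function.iterate_succ_apply]
  rcases hR with h | h <;> rw [h]
  · rw [Function.iterate_fixed f2]
    rintro (h | h)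
    · field_simp at h
      linarith
    · rw [Set.mem_singleton_iff] at h
      field_simp at h
      linarith
  · rw [Function.iterate_fixed f0]
    rintro (h | h)
    · have : 0 < 1 / ((b : ℝ) + 1) := by positivity
      linarith
    · rw [Set.mem_singleton_iff] at h
      have : 0 < (2 * (b : ℝ) + 1) / ((b : ℝ) + 1) := by positivity
      linarith

theorem Pm_lt_absurd (b : ℕ) (hb : 2 ≤ b) (m n : ℕ) (h : m < n) (x : ℝ)
    (hm : x ∈ Pm b m) (hn : x ∈ Pm b n) : False := by
  obtain ⟨k, rfl⟩ := Nat.exists_eq_add_of_lt h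
  have h2 : (Rb b)^[m + k + 1] x ∈ Eb b := hn
  rw [show m + k + 1 = (k + 1) + m by omega, Function.iterate_add_apply] at h2
  exact Rb_iter_Eb_not_mem b hb _ hm k h2

/-- For all `m ≠ n`, the sets `P_m` and `P_n` are disjoint: no real `x` satisfies both
`R_b^∘m(x) ∈ E_b` and `R_b^∘n(x) ∈ E_b`. -/
theorem preimage_sets_disjoint (b : ℕ) (hb : 2 ≤ b) :
    ∀ m n : ℕ, m ≠ n → Disjoint (Pm b m) (Pm b n) := by
  intro m n hmn
  rw [Set.disjoint_left]
  intro x hm hn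
  rcases lt_or_gt_of_ne hmn with h | h
  · exact Pm_lt_absurd b hb m n h x hm hn
  · exact Pm_lt_absurd b hb n m h x hn hm
end

section
/- For every integer m ≥ 0, the set P_m is finite with exactly 2·3^m elements, and P_m ⊆ [0,2]. -/
open Set

theorem Rb_fiber (b : ℕ) (hb : 2 ≤ b) (w : ℝ) (hw : w ∈ Ioo (0 : ℝ) 2) :
    ∃ x y z : ℝ, Rb b x = w ∧ Rb b y = w ∧ Rb b z = w ∧
      x ∈ Ioo 0 (1 / ((b : ℝ) + 1)) ∧
      y ∈ Ioo ((b : ℝ) / ((b : ℝ) + 1)) (((b : ℝ) + 2) / ((b : ℝ) + 1)) ∧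
      z ∈ Ioo ((2 * (b : ℝ) + 1) / ((b : ℝ) + 1)) 2 ∧
      ∀ t, Rb b t = w → t = x ∨ t = y ∨ t = z := by
  have hb' : (2 : ℝ) ≤ b := by exact_mod_cast hb
  have hb0 : (b : ℝ) ≠ 0 := by positivity
  have hc0 : (b : ℝ) + 1 ≠ 0 := by positivity
  have hc : (0 : ℝ) < (b : ℝ) + 1 := by positivity
  have hcont : Continuous (Rb b) := by unfold Rb; fun_prop
  have e0 : Rb b 0 = 0 := by simp [Rb]
  have e1 : Rb b (1 / ((b : ℝ) + 1)) = 2 := by unfold Rb; field_simp; ring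
  have e2 : Rb b ((b : ℝ) / ((b : ℝ) + 1)) = 2 := by unfold Rb; field_simp; ring
  have e3 : Rb b (((b : ℝ) + 2) / ((b : ℝ) + 1)) = 0 := by unfold Rb; field_simp; ring
  have e4 : Rb b ((2 * (b : ℝ) + 1) / ((b : ℝ) + 1)) = 0 := by unfold Rb; field_simp; ring
  have e5 : Rb b 2 = 2 := by unfold Rb; field_simp; ring
  obtain ⟨x, hx, hxw⟩ := intermediate_value_Ioo (f := Rb b) (a := 0) (b := 1 / ((b : ℝ) + 1))
    (by positivity) hcont.continuousOn (by rw [e0, e1]; exact hw)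
  obtain ⟨y, hy, hyw⟩ := intermediate_value_Ioo' (f := Rb b) (a := (b : ℝ) / ((b : ℝ) + 1))
    (b := ((b : ℝ) + 2) / ((b : ℝ) + 1))
    (by gcongr; linarith) hcont.continuousOn (by rw [e2, e3]; exact hw)
  obtain ⟨z, hz, hzw⟩ := intermediate_value_Ioo (f := Rb b)
    (a := (2 * (b : ℝ) + 1) / ((b : ℝ) + 1)) (b := 2)
    (by rw [div_le_iff₀ hc]; linarith) hcont.continuousOn (by rw [e4, e5]; exact hw)
  refine ⟨x, y, z, hxw, hyw, hzw, hx, hy, hz, ?_⟩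
  have h1 : 1 / ((b : ℝ) + 1) ≤ (b : ℝ) / ((b : ℝ) + 1) := by gcongr; linarith
  have h2 : ((b : ℝ) + 2) / ((b : ℝ) + 1) ≤ (2 * (b : ℝ) + 1) / ((b : ℝ) + 1) := by
    gcongr ?_ / _; linarith
  have hxy : x < y := by linarith [hx.2, hy.1]
  have hyz : y < z := by linarith [hy.2, hz.1]
  -- if three points share a value and are distinct, their sum is `3`
  have key : ∀ t, Rb b t = w → t ≠ x → t ≠ y → t + x + y = 3 := by
    intro t ht htx hty
    have quad : ∀ s, Rb b s = w → s ≠ x →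
        ((b : ℝ) + 1) ^ 2 * (s ^ 2 + s * x + x ^ 2) - 3 * ((b : ℝ) + 1) ^ 2 * (s + x)
          + (2 * b + 1) * (b + 2) = 0 := by
      intro s hs hsx
      have h : Rb b s = Rb b x := hs.trans hxw.symm
      unfold Rb at h
      field_simp at h
      apply mul_left_cancel₀ (sub_ne_zero.mpr hsx)
      linear_combination h
    have q1 := quad t ht htx
    have q2 := quad y hyw hxy.ne'
    have : ((b : ℝ) + 1) ^ 2 * (t - y) ≠ 0 := mul_ne_zero (by positivity) (sub_ne_zero.mpr hty)
    apply mul_left_cancel₀ this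
    linear_combination q1 - q2
  intro t ht
  by_contra! hne
  have k1 := key t ht hne.1 hne.2.1
  have k2 := key z hzw (hxy.trans hyz).ne' hyz.ne'
  exact hne.2.2 (by linarith)

theorem Rb_preimage (b : ℕ) (hb : 2 ≤ b) (S : Set ℝ) (hS : S ⊆ Ioo (0 : ℝ) 2) (hf : S.Finite) :
    (Rb b ⁻¹' S).Finite ∧ (Rb b ⁻¹' S).ncard = 3 * S.ncard ∧ Rb b ⁻¹' S ⊆ Ioo (0 : ℝ) 2 := by
  have hb' : (2 : ℝ) ≤ b := by exact_mod_cast hb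
  have hc : (0 : ℝ) < (b : ℝ) + 1 := by positivity
  have h0 : (0 : ℝ) < 1 / ((b : ℝ) + 1) := by positivity
  have h1 : 1 / ((b : ℝ) + 1) ≤ (b : ℝ) / ((b : ℝ) + 1) := by gcongr; linarith
  have h2 : ((b : ℝ) + 2) / ((b : ℝ) + 1) ≤ (2 * (b : ℝ) + 1) / ((b : ℝ) + 1) := by
    gcongr ?_ / _; linarith
  have h3 : (2 * (b : ℝ) + 1) / ((b : ℝ) + 1) ≤ 2 := by rw [div_le_iff₀ hc]; linarith
  have h4 : (b : ℝ) / ((b : ℝ) + 1) ≤ ((b : ℝ) + 2) / ((b : ℝ) + 1) := by gcongr; linarith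
  have hfib : ∀ w : ℝ, ∃ x y z : ℝ, w ∈ Ioo (0 : ℝ) 2 → Rb b x = w ∧ Rb b y = w ∧ Rb b z = w ∧
      x ∈ Ioo 0 (1 / ((b : ℝ) + 1)) ∧
      y ∈ Ioo ((b : ℝ) / ((b : ℝ) + 1)) (((b : ℝ) + 2) / ((b : ℝ) + 1)) ∧
      z ∈ Ioo ((2 * (b : ℝ) + 1) / ((b : ℝ) + 1)) 2 ∧
      ∀ t, Rb b t = w → t = x ∨ t = y ∨ t = z := by
    intro w
    by_cases hw : w ∈ Ioo (0 : ℝ) 2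
    · obtain ⟨x, y, z, h⟩ := Rb_fiber b hb w hw
      exact ⟨x, y, z, fun _ => h⟩
    · exact ⟨0, 0, 0, fun h => absurd h hw⟩
  choose f g h H using hfib
  have heq : Rb b ⁻¹' S = f '' S ∪ (g '' S ∪ h '' S) := by
    ext t
    constructor
    · intro ht
      obtain ⟨-, -, -, -, -, -, hh⟩ := H _ (hS ht)
      rcases hh t rfl with e | e | e
      · exact Or.inl ⟨_, ht, e.symm⟩
      · exact Or.inr (Or.inl ⟨_, ht, e.symm⟩)
      · exact Or.inr (Or.inr ⟨_, ht, e.symm⟩)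
    · rintro (⟨w, hw, rfl⟩ | ⟨w, hw, rfl⟩ | ⟨w, hw, rfl⟩)
      · change Rb b (f w) ∈ S
        rw [(H w (hS hw)).1]; exact hw
      · change Rb b (g w) ∈ S
        rw [(H w (hS hw)).2.1]; exact hw
      · change Rb b (h w) ∈ S
        rw [(H w (hS hw)).2.2.1]; exact hw
  have i1 : InjOn f S := fun u hu v hv e => by
    rw [← (H u (hS hu)).1, ← (H v (hS hv)).1, e]
  have i2 : InjOn g S := fun u hu v hv e => by
    rw [← (H u (hS hu)).2.1, ← (H v (hS hv)).2.1, e]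
  have i3 : InjOn h S := fun u hu v hv e => by
    rw [← (H u (hS hu)).2.2.1, ← (H v (hS hv)).2.2.1, e]
  have d1 : Disjoint (g '' S) (h '' S) := by
    rw [Set.disjoint_left]
    rintro _ ⟨u, hu, rfl⟩ ⟨v, hv, e⟩
    have a := (H u (hS hu)).2.2.2.2.1.2
    have c := (H v (hS hv)).2.2.2.2.2.1.1
    linarith
  have d2 : Disjoint (f '' S) (g '' S ∪ h '' S) := by
    rw [Set.disjoint_left]
    rintro _ ⟨u, hu, rfl⟩ (⟨v, hv, e⟩ | ⟨v, hv, e⟩)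
    · have a := (H u (hS hu)).2.2.2.1.2
      have c := (H v (hS hv)).2.2.2.2.1.1
      linarith
    · have a := (H u (hS hu)).2.2.2.1.2
      have c := (H v (hS hv)).2.2.2.2.2.1.1
      linarith
  have f1 := hf.image f
  have f2 := hf.image g
  have f3 := hf.image h
  refine ⟨heq ▸ f1.union (f2.union f3), ?_, ?_⟩
  · rw [heq, ncard_union_eq d2 f1 (f2.union f3), ncard_union_eq d1 f2 f3,
      ncard_image_of_injOn i1, ncard_image_of_injOn i2, ncard_image_of_injOn i3]
    ring
  · rw [heq]
    rintro _ (⟨u, hu, rfl⟩ | ⟨u, hu, rfl⟩ | ⟨u, hu, rfl⟩)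
    · obtain ⟨a, c⟩ := (H u (hS hu)).2.2.2.1
      constructor <;> linarith
    · obtain ⟨a, c⟩ := (H u (hS hu)).2.2.2.2.1
      constructor <;> linarith
    · obtain ⟨a, c⟩ := (H u (hS hu)).2.2.2.2.2.1
      constructor <;> linarith

/-- For every `m ≥ 0`, the set `P_m` is finite with exactly `2·3^m` elements, and
`P_m ⊆ [0,2]`. -/
theorem preimage_sets_card (b : ℕ) (hb : 2 ≤ b) :
    ∀ m : ℕ, (Pm b m).Finite ∧ (Pm b m).ncard = 2 * 3 ^ m ∧
      Pm b m ⊆ Icc (0 : ℝ) 2 := by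
  have main : ∀ m : ℕ, (Pm b m).Finite ∧ (Pm b m).ncard = 2 * 3 ^ m ∧
      Pm b m ⊆ Ioo (0 : ℝ) 2 := by
    intro m
    induction m with
    | zero =>
      have hb' : (2 : ℝ) ≤ b := by exact_mod_cast hb
      have hc : (0 : ℝ) < (b : ℝ) + 1 := by positivity
      have h0 : Pm b 0 = {1 / ((b : ℝ) + 1), (2 * (b : ℝ) + 1) / ((b : ℝ) + 1)} := rfl
      have hlt : 1 / ((b : ℝ) + 1) < (2 * (b : ℝ) + 1) / ((b : ℝ) + 1) := by
        gcongr; linarith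
      have hpos : (0 : ℝ) < 1 / ((b : ℝ) + 1) := by positivity
      have h2 : (2 * (b : ℝ) + 1) / ((b : ℝ) + 1) < 2 := by rw [div_lt_iff₀ hc]; linarith
      rw [h0]
      refine ⟨Set.toFinite _, by rw [ncard_pair hlt.ne]; norm_num, ?_⟩
      rintro t (rfl | rfl)
      · exact ⟨hpos, hlt.trans h2⟩
      · exact ⟨hpos.trans hlt, h2⟩
    | succ m ih =>
      have hs : Pm b (m + 1) = Rb b ⁻¹' Pm b m := rfl
      obtain ⟨h1, h2, h3⟩ := Rb_preimage b hb (Pm b m) ih.2.2 ih.1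
      rw [hs]
      exact ⟨h1, by rw [h2, ih.2.1]; ring, h3⟩
  intro m
  obtain ⟨h1, h2, h3⟩ := main m
  exact ⟨h1, h2, h3.trans Ioo_subset_Icc_self⟩
end

section
/- There exists a constant C > 1 such that |R_b'(x)| ≥ C for every x ∈ [0,2] \ (E_1^0 ∪ E_1^1); that is, R_b is uniformly expanding on the complement of the two level-one gap intervals inside [0,2]. -/
open Set

/-- There is `C > 1` with `|R_b'(x)| ≥ C` for every
`x ∈ [0,2] \ (E₁⁰ ∪ E₁¹)`, where `E₁⁰ = (1/(b+1), b/(b+1))` and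
`E₁¹ = ((b+2)/(b+1), (2b+1)/(b+1))`: `R_b` is uniformly expanding on the complement of
the two level-one gap intervals inside `[0,2]`. -/
theorem uniformly_expanding_off_gaps (b : ℕ) (hb : 2 ≤ b) :
    ∃ C : ℝ, 1 < C ∧
      ∀ x ∈ Icc (0 : ℝ) 2 \
        (Ioo (1 / ((b : ℝ) + 1)) ((b : ℝ) / ((b : ℝ) + 1)) ∪
         Ioo (((b : ℝ) + 2) / ((b : ℝ) + 1)) ((2 * (b : ℝ) + 1) / ((b : ℝ) + 1))),
        C ≤ |deriv (Rb b) x| := by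
  have hB : (2 : ℝ) ≤ (b : ℝ) := by exact_mod_cast hb
  refine ⟨2, by norm_num, ?_⟩
  rintro x ⟨⟨hx0, hx2⟩, hx⟩
  have hd : deriv (Rb b) x =
      (3 * (((b : ℝ) + 1) * x - ((b : ℝ) + 1)) ^ 2 - ((b : ℝ) ^ 2 + b + 1)) / b := by
    have h1 : HasDerivAt (fun z : ℝ => z / (b : ℝ)) (1 / (b : ℝ)) x :=
      (hasDerivAt_id x).div_const _
    have h2 : ∀ c : ℝ, HasDerivAt (fun z : ℝ => ((b : ℝ) + 1) * z - c)
        (((b : ℝ) + 1) * 1) x := fun c =>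
      ((hasDerivAt_id x).const_mul _).sub_const c
    have h3 := ((h1.mul (h2 (2 * (b : ℝ) + 1))).mul (h2 ((b : ℝ) + 2))).deriv
    refine Eq.trans h3 ?_
    simp only [Pi.mul_apply]
    field_simp
    ring
  rw [hd]
  have hb0 : (0 : ℝ) < b := by linarith
  have hp : (0 : ℝ) < (b : ℝ) + 1 := by linarith
  rw [mem_union, not_or, mem_Ioo, mem_Ioo, div_lt_iff₀ hp, lt_div_iff₀ hp,
    div_lt_iff₀ hp, lt_div_iff₀ hp] at hx
  obtain ⟨ha, hc⟩ := hx
  rw [not_and_or, not_lt, not_lt] at ha hc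
  set v : ℝ := ((b : ℝ) + 1) * x - ((b : ℝ) + 1) with hv
  rw [le_abs]
  have far : (b : ℝ) ^ 2 ≤ v ^ 2 →
      2 ≤ (3 * v ^ 2 - ((b : ℝ) ^ 2 + b + 1)) / b := by
    intro h
    rw [le_div_iff₀ hb0]
    nlinarith
  rcases ha with ha | ha
  · left
    apply far
    nlinarith
  · rcases hc with hc | hc
    · right
      have : v ^ 2 ≤ 1 := by
        have h1 : -1 ≤ v := by linarith
        have h2 : v ≤ 1 := by linarith
        nlinarith
      rw [← neg_div, le_div_iff₀ hb0]
      nlinarith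
    · left
      apply far
      have : (b : ℝ) ≤ v := by linarith
      nlinarith
end

section
/- The measure ν_b is a probability measure on ℝ (its total mass equals 1), and its topological support equals J_b, the closure of ⋃_{m≥0} P_m. -/
open Set MeasureTheory

/-- The density of states `ν_b = Σ_m ((b−1)/(2(b+2)^{m+1})) Σ_{λ ∈ P_m} δ_λ`. -/
noncomputable def nub (b : ℕ) : Measure ℝ :=
  Measure.sum fun m : ℕ =>
    ENNReal.ofReal (((b : ℝ) - 1) / (2 * ((b : ℝ) + 2) ^ (m + 1))) •
      Measure.sum fun lam : Pm b m => Measure.dirac (lam : ℝ)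


lemma Rb_three (b : ℕ) (hb : 2 ≤ b) (x y z : ℝ) (hxy : x ≠ y) (hxz : x ≠ z) (hyz : y ≠ z)
    (h1 : Rb b x = Rb b y) (h2 : Rb b x = Rb b z) : x + y + z = 3 := by
  have hb' : (2 : ℝ) ≤ b := by exact_mod_cast hb
  have hb0 : (b : ℝ) ≠ 0 := by positivity
  have hb1 : (b : ℝ) + 1 ≠ 0 := by positivity
  unfold Rb at h1 h2
  field_simp at h1 h2
  set c : ℝ := (b : ℝ) with hc
  have e1 : (c + 1) ^ 2 * (x ^ 2 + x * y + y ^ 2) - 3 * (c + 1) ^ 2 * (x + y)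
      + (2 * c + 1) * (c + 2) = 0 := by
    apply mul_left_cancel₀ (sub_ne_zero.mpr hxy)
    linear_combination h1
  have e2 : (c + 1) ^ 2 * (x ^ 2 + x * z + z ^ 2) - 3 * (c + 1) ^ 2 * (x + z)
      + (2 * c + 1) * (c + 2) = 0 := by
    apply mul_left_cancel₀ (sub_ne_zero.mpr hxz)
    linear_combination h2
  apply mul_left_cancel₀ (pow_ne_zero 2 hb1)
  apply mul_left_cancel₀ (sub_ne_zero.mpr hyz)
  linear_combination e1 - e2

lemma Rb_cont (b : ℕ) : Continuous (Rb b) := by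
  unfold Rb
  fun_prop

lemma Rb_fiber_s12 (b : ℕ) (hb : 2 ≤ b) (y : ℝ) (hy : y ∈ Ioo (0 : ℝ) 2) :
    ∃ F : Finset ℝ, F.card = 3 ∧ (∀ x, x ∈ F ↔ Rb b x = y) ∧ ∀ x ∈ F, x ∈ Ioo (0 : ℝ) 2 := by
  have hb' : (2 : ℝ) ≤ b := by exact_mod_cast hb
  have hb0 : (b : ℝ) ≠ 0 := by positivity
  have hp : (0 : ℝ) < (b : ℝ) + 1 := by positivity
  have v0 : Rb b 0 = 0 := by simp [Rb]
  have v1 : Rb b (1 / ((b : ℝ) + 1)) = 2 := by unfold Rb; field_simp; ring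
  have v2 : Rb b ((b : ℝ) / ((b : ℝ) + 1)) = 2 := by unfold Rb; field_simp; ring
  have v3 : Rb b (((b : ℝ) + 2) / ((b : ℝ) + 1)) = 0 := by unfold Rb; field_simp; ring
  have v4 : Rb b ((2 * (b : ℝ) + 1) / ((b : ℝ) + 1)) = 0 := by unfold Rb; field_simp; ring
  have v5 : Rb b 2 = 2 := by unfold Rb; field_simp; ring
  have o1 : (0 : ℝ) < 1 / ((b : ℝ) + 1) := by positivity
  have o2 : 1 / ((b : ℝ) + 1) < (b : ℝ) / ((b : ℝ) + 1) := by gcongr; linarith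
  have o3 : (b : ℝ) / ((b : ℝ) + 1) < ((b : ℝ) + 2) / ((b : ℝ) + 1) := by gcongr; linarith
  have o4 : ((b : ℝ) + 2) / ((b : ℝ) + 1) < (2 * (b : ℝ) + 1) / ((b : ℝ) + 1) := by
    gcongr ?_ / _; linarith
  have o5 : (2 * (b : ℝ) + 1) / ((b : ℝ) + 1) < 2 := by rw [div_lt_iff₀ hp]; linarith
  obtain ⟨x1, ⟨h1, h1'⟩, e1⟩ := intermediate_value_Ioo o1.le (Rb_cont b).continuousOn
    (by rw [v0, v1]; exact hy)
  obtain ⟨x2, ⟨h2, h2'⟩, e2⟩ := intermediate_value_Ioo' o3.le (Rb_cont b).continuousOn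
    (by rw [v2, v3]; exact hy)
  obtain ⟨x3, ⟨h3, h3'⟩, e3⟩ := intermediate_value_Ioo o5.le (Rb_cont b).continuousOn
    (by rw [v4, v5]; exact hy)
  have n12 : x1 ≠ x2 := by apply ne_of_lt; linarith
  have n13 : x1 ≠ x3 := by apply ne_of_lt; linarith
  have n23 : x2 ≠ x3 := by apply ne_of_lt; linarith
  refine ⟨{x1, x2, x3}, Finset.card_eq_three.mpr ⟨x1, x2, x3, n12, n13, n23, rfl⟩, ?_, ?_⟩
  · intro x
    simp only [Finset.mem_insert, Finset.mem_singleton]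
    constructor
    · rintro (rfl | rfl | rfl) <;> assumption
    · intro hx
      by_contra! hne
      have s1 := Rb_three b hb x1 x2 x3 n12 n13 n23 (by rw [e1, e2]) (by rw [e1, e3])
      have s2 := Rb_three b hb x1 x2 x n12 hne.1.symm hne.2.1.symm (by rw [e1, e2]) (by rw [e1, hx])
      exact hne.2.2 (by linarith)
  · intro x
    simp only [Finset.mem_insert, Finset.mem_singleton, mem_Ioo]
    rintro (rfl | rfl | rfl) <;> constructor <;> linarith

lemma Pm_finset (b : ℕ) (hb : 2 ≤ b) (m : ℕ) :
    ∃ S : Finset ℝ, (∀ x, x ∈ S ↔ x ∈ Pm b m) ∧ S.card = 2 * 3 ^ m ∧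
      ∀ x ∈ S, x ∈ Ioo (0 : ℝ) 2 := by
  have hb' : (2 : ℝ) ≤ b := by exact_mod_cast hb
  have hp : (0 : ℝ) < (b : ℝ) + 1 := by positivity
  induction m with
  | zero =>
    have o4 : 1 / ((b : ℝ) + 1) < (2 * (b : ℝ) + 1) / ((b : ℝ) + 1) := by
      gcongr ?_ / _; linarith
    have o5 : (2 * (b : ℝ) + 1) / ((b : ℝ) + 1) < 2 := by rw [div_lt_iff₀ hp]; linarith
    have o1 : (0 : ℝ) < 1 / ((b : ℝ) + 1) := by positivity
    refine ⟨{1 / ((b : ℝ) + 1), (2 * (b : ℝ) + 1) / ((b : ℝ) + 1)}, ?_, ?_, ?_⟩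
    · intro x
      simp only [Finset.mem_insert, Finset.mem_singleton, Pm, Eb, Function.iterate_zero, id,
        mem_ofPred_eq, mem_insert_iff, mem_singleton_iff]
    · rw [Finset.card_pair o4.ne]; norm_num
    · intro x
      simp only [Finset.mem_insert, Finset.mem_singleton, mem_Ioo]
      rintro (rfl | rfl) <;> constructor <;> linarith
  | succ m ih =>
    obtain ⟨S, hS, hc, hI⟩ := ih
    choose! F hF using Rb_fiber_s12 b hb
    refine ⟨S.biUnion F, ?_, ?_, ?_⟩
    · intro x
      have : x ∈ Pm b (m + 1) ↔ Rb b x ∈ Pm b m := by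
        simp only [Pm, mem_ofPred_eq, Function.iterate_succ_apply]
      rw [this, ← hS, Finset.mem_biUnion]
      constructor
      · rintro ⟨y, hy, hx⟩
        rw [((hF y (hI y hy)).2.1 x).1 hx]
        exact hy
      · intro h
        exact ⟨_, h, ((hF _ (hI _ h)).2.1 x).2 rfl⟩
    · rw [Finset.card_biUnion, Finset.sum_congr rfl (fun y hy => (hF y (hI y hy)).1),
        Finset.sum_const, hc]
      · simp only [smul_eq_mul]; ring
      · intro y hy z hz hyz
        rw [Function.onFun, Finset.disjoint_left]
        intro x hx hx'
        exact hyz ((((hF y (hI y hy)).2.1 x).1 hx).symm.trans (((hF z (hI z hz)).2.1 x).1 hx'))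
    · intro x hx
      obtain ⟨y, hy, hx⟩ := Finset.mem_biUnion.1 hx
      exact (hF y (hI y hy)).2.2 x hx

lemma nub_apply (b : ℕ) (U : Set ℝ) (hU : MeasurableSet U) :
    nub b U = ∑' m : ℕ, ENNReal.ofReal (((b : ℝ) - 1) / (2 * ((b : ℝ) + 2) ^ (m + 1))) *
      ∑' lam : Pm b m, U.indicator 1 (lam : ℝ) := by
  unfold nub
  rw [Measure.sum_apply _ hU]
  congr 1; ext m
  rw [Measure.smul_apply, Measure.sum_apply _ hU, smul_eq_mul]
  congr 2; ext lam
  rw [Measure.dirac_apply' _ hU]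

lemma nub_univ (b : ℕ) (hb : 2 ≤ b) : nub b Set.univ = 1 := by
  have hb' : (2 : ℝ) ≤ b := by exact_mod_cast hb
  rw [nub_apply _ _ MeasurableSet.univ]
  have key : ∀ m : ℕ, ENNReal.ofReal (((b : ℝ) - 1) / (2 * ((b : ℝ) + 2) ^ (m + 1))) *
      ∑' lam : Pm b m, (univ : Set ℝ).indicator (1 : ℝ → ENNReal) (lam : ℝ) =
      ENNReal.ofReal (((b : ℝ) - 1) / ((b : ℝ) + 2) * (3 / ((b : ℝ) + 2)) ^ m) := by
    intro m
    obtain ⟨S, hS, hc, -⟩ := Pm_finset b hb m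
    have hSe : Pm b m = (S : Set ℝ) := by ext x; exact (hS x).symm
    rw [hSe]
    have : ∑' lam : (S : Set ℝ), (univ : Set ℝ).indicator (1 : ℝ → ENNReal) (lam : ℝ)
        = ENNReal.ofReal (2 * 3 ^ m) := by
      rw [Finset.tsum_subtype' S]
      simp only [indicator_univ, Pi.one_apply, Finset.sum_const, hc, nsmul_eq_mul, mul_one]
      rw [← ENNReal.ofReal_natCast]
      push_cast
      rfl
    rw [this, ← ENNReal.ofReal_mul]
    · congr 1
      have : (b : ℝ) + 2 ≠ 0 := by positivity
      rw [div_pow]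
      field_simp
      ring
    · apply div_nonneg <;> [linarith; positivity]
  simp_rw [key]
  have hr : 3 / ((b : ℝ) + 2) < 1 := by rw [div_lt_one (by positivity)]; linarith
  have hr0 : 0 ≤ 3 / ((b : ℝ) + 2) := by positivity
  have hs := (hasSum_geometric_of_lt_one hr0 hr).mul_left (((b : ℝ) - 1) / ((b : ℝ) + 2))
  rw [← ENNReal.ofReal_tsum_of_nonneg _ hs.summable, hs.tsum_eq]
  · rw [← ENNReal.ofReal_one]
    congr 1
    have h2 : (b : ℝ) + 2 ≠ 0 := by positivity
    have h1 : (b : ℝ) - 1 ≠ 0 := by apply ne_of_gt; linarith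
    have : 1 - 3 / ((b : ℝ) + 2) = ((b : ℝ) - 1) / ((b : ℝ) + 2) := by field_simp; ring
    rw [this]
    exact mul_inv_cancel₀ (div_ne_zero h1 h2)
  · intro m
    apply mul_nonneg
    · apply div_nonneg <;> linarith
    · positivity

/-- `ν_b` is a probability measure, and its topological support (the set of points all
of whose open neighborhoods have nonzero measure) equals `J_b`, the closure of
`⋃_{m≥0} P_m`. -/
theorem nub_probability_and_support (b : ℕ) (hb : 2 ≤ b) :
    nub b Set.univ = 1 ∧
    {x : ℝ | ∀ U : Set ℝ, IsOpen U → x ∈ U → nub b U ≠ 0} =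
      closure (⋃ m : ℕ, Pm b m) := by
  have hb' : (2 : ℝ) ≤ b := by exact_mod_cast hb
  refine ⟨nub_univ b hb, ?_⟩
  ext x
  rw [mem_ofPred_eq, mem_closure_iff]
  refine forall_congr' fun U => forall_congr' fun hU => forall_congr' fun _ => ?_
  rw [nub_apply _ _ hU.measurableSet, Ne, ENNReal.tsum_eq_zero]
  constructor
  · intro h
    by_contra hne
    apply h
    intro m
    rw [mul_eq_zero, ENNReal.tsum_eq_zero]
    right
    intro lam
    apply indicator_of_notMem
    intro hl
    exact hne ⟨lam, hl, mem_iUnion.2 ⟨m, lam.2⟩⟩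
  · rintro ⟨y, hyU, hy⟩ h
    obtain ⟨m, hm⟩ := mem_iUnion.1 hy
    have := h m
    rw [mul_eq_zero, ENNReal.tsum_eq_zero] at this
    rcases this with h0 | h0
    · rw [ENNReal.ofReal_eq_zero] at h0
      have : 0 < ((b : ℝ) - 1) / (2 * ((b : ℝ) + 2) ^ (m + 1)) := by
        apply div_pos <;> [linarith; positivity]
      linarith
    · have := h0 ⟨y, hm⟩
      simp [hyU] at this
end

section
/- The density of states satisfies the self-similarity functional equation at atoms: for every x ∈ ℝ, 2(b+2)·ν_b({x}) = 2·ν_b({R_b(x)}) + (b−1)·𝟙_{E_b}(x), where 𝟙_{E_b} is the indicator function of the exceptional set. In particular, ν_b({x}) = ν_b({R_b(x)})/(b+2) whenever x ∉ E_b. -/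
open Set MeasureTheory ENNReal

lemma nub_singleton (b : ℕ) (x : ℝ) : nub b {x} =
    ∑' m : ℕ, ENNReal.ofReal (((b : ℝ) - 1) / (2 * ((b : ℝ) + 2) ^ (m + 1))) *
      (Pm b m).indicator (fun _ => (1 : ℝ≥0∞)) x := by
  have hx : MeasurableSet ({x} : Set ℝ) := measurableSet_singleton x
  rw [nub, Measure.sum_apply _ hx]
  congr 1
  ext m
  rw [Measure.smul_apply, Measure.sum_apply _ hx, smul_eq_mul]
  congr 1
  simp only [Measure.dirac_apply' _ hx]
  by_cases h : x ∈ Pm b m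
  · rw [tsum_eq_single (⟨x, h⟩ : Pm b m)]
    · simp [h]
    · intro y hy
      have : (y : ℝ) ≠ x := fun h' => hy (Subtype.ext h')
      simp [this]
  · rw [Set.indicator_of_notMem h, ENNReal.tsum_eq_zero]
    intro y
    have : (y : ℝ) ≠ x := fun h' => h (h' ▸ y.2)
    simp [this]

lemma nub_coeff_succ (b m : ℕ) :
    (2 * ((b : ℝ≥0∞) + 2)) *
      ENNReal.ofReal (((b : ℝ) - 1) / (2 * ((b : ℝ) + 2) ^ (m + 1 + 1))) =
    2 * ENNReal.ofReal (((b : ℝ) - 1) / (2 * ((b : ℝ) + 2) ^ (m + 1))) := by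
  have h1 : (2 * ((b : ℝ≥0∞) + 2)) = ENNReal.ofReal (2 * ((b : ℝ) + 2)) := by
    rw [ENNReal.ofReal_mul (by norm_num), ENNReal.ofReal_add (by positivity) (by norm_num)]
    simp
  have h2 : (2 : ℝ≥0∞) = ENNReal.ofReal 2 := by simp
  rw [h1]
  conv_rhs => rw [h2]
  rw [← ENNReal.ofReal_mul (by positivity), ← ENNReal.ofReal_mul (by positivity)]
  congr 1
  have : (b : ℝ) + 2 ≠ 0 := by positivity
  field_simp
  ring

lemma nub_coeff_zero (b : ℕ) :
    (2 * ((b : ℝ≥0∞) + 2)) *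
      ENNReal.ofReal (((b : ℝ) - 1) / (2 * ((b : ℝ) + 2) ^ (0 + 1))) = (b : ℝ≥0∞) - 1 := by
  have h1 : (2 * ((b : ℝ≥0∞) + 2)) = ENNReal.ofReal (2 * ((b : ℝ) + 2)) := by
    rw [ENNReal.ofReal_mul (by norm_num), ENNReal.ofReal_add (by positivity) (by norm_num)]
    simp
  have h3 : (b : ℝ≥0∞) - 1 = ENNReal.ofReal ((b : ℝ) - 1) := by
    rw [ENNReal.ofReal_sub _ (by norm_num)]
    simp
  rw [h1, h3, ← ENNReal.ofReal_mul (by positivity)]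
  congr 1
  have : (b : ℝ) + 2 ≠ 0 := by positivity
  field_simp
  ring

lemma nub_main (b : ℕ) (x : ℝ) :
    (2 * ((b : ℝ≥0∞) + 2)) * nub b {x} =
        2 * nub b {Rb b x} +
          ((b : ℝ≥0∞) - 1) * (Eb b).indicator (fun _ => (1 : ℝ≥0∞)) x := by
  rw [nub_singleton, nub_singleton, ← ENNReal.tsum_mul_left, ← ENNReal.tsum_mul_left,
    tsum_eq_zero_add' ENNReal.summable, add_comm]
  congr 1
  · congr 1
    ext m
    rw [← mul_assoc, nub_coeff_succ, ← mul_assoc]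
    congr 1
  · rw [← mul_assoc, nub_coeff_zero]
    congr 1

/-- Self-similarity of the density of states at atoms: for every `x`,
`2(b+2)·ν_b({x}) = 2·ν_b({R_b(x)}) + (b−1)·𝟙_{E_b}(x)`; in particular
`ν_b({x}) = ν_b({R_b(x)})/(b+2)` whenever `x ∉ E_b`. -/
theorem nub_self_similar_at_atoms (b : ℕ) (hb : 2 ≤ b) :
    (∀ x : ℝ,
      (2 * ((b : ℝ≥0∞) + 2)) * nub b {x} =
        2 * nub b {Rb b x} +
          ((b : ℝ≥0∞) - 1) * (Eb b).indicator (fun _ => (1 : ℝ≥0∞)) x) ∧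
    ∀ x : ℝ, x ∉ Eb b → nub b {x} = nub b {Rb b x} / ((b : ℝ≥0∞) + 2) := by
  refine ⟨nub_main b, fun x hx => ?_⟩
  have h := nub_main b x
  rw [Set.indicator_of_notMem hx, mul_zero, add_zero, mul_assoc] at h
  have h' := (ENNReal.mul_right_inj (by norm_num) (by norm_num)).1 h
  rw [ENNReal.eq_div_iff (by simp) (by finiteness)]
  exact h'
end

section
/- There exists a constant C such that for every integer ℓ ≥ 1 and every Borel set A ⊆ ℝ, |ν_b(A) − ν_{ℓ,b}(A)| ≤ C·(3/(b+2))^ℓ; that is, the level-ℓ densities of states converge to ν_b in total variation at a geometric rate. -/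
open Set MeasureTheory

/-- The level-`ℓ` density of states
`ν_{ℓ,b} = Σ_{m=0}^{ℓ−1} (((b−1)(b+2)^{ℓ−m−1}+2)/(2((b+2)^ℓ−1))) Σ_{λ ∈ P_m} δ_λ`. -/
noncomputable def nuLb (b ℓ : ℕ) : Measure ℝ :=
  Measure.sum fun m : Fin ℓ =>
    ENNReal.ofReal ((((b : ℝ) - 1) * ((b : ℝ) + 2) ^ (ℓ - (m : ℕ) - 1) + 2) /
        (2 * (((b : ℝ) + 2) ^ ℓ - 1))) •
      Measure.sum fun lam : Pm b (m : ℕ) => Measure.dirac (lam : ℝ)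

theorem fiber_bound (b : ℕ) (hb : 2 ≤ b) (y : ℝ) :
    ∃ F : Finset ℝ, (∀ x, Rb b x = y → x ∈ F) ∧ F.card ≤ 3 := by
  have hb0 : (0 : ℝ) < b := by positivity
  let P : Cubic ℝ := ⟨((b : ℝ) + 1) ^ 2 / b, -((b : ℝ) + 1) * (3 * b + 3) / b,
    (2 * (b : ℝ) + 1) * (b + 2) / b, -y⟩
  have ha : P.a ≠ 0 := by
    show ((b : ℝ) + 1) ^ 2 / b ≠ 0
    positivity
  refine ⟨P.toPoly.roots.toFinset, ?_, ?_⟩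
  · intro x hx
    rw [Multiset.mem_toFinset, Polynomial.mem_roots (Cubic.ne_zero_of_a_ne_zero ha)]
    simp only [Polynomial.IsRoot, Cubic.toPoly, P]
    simp only [Polynomial.eval_add, Polynomial.eval_mul, Polynomial.eval_C, Polynomial.eval_pow,
      Polynomial.eval_X]
    rw [← hx]
    unfold Rb
    field_simp
    ring
  · refine (Multiset.toFinset_card_le _).trans ((Polynomial.card_roots' _).trans ?_)
    rw [Cubic.natDegree_of_a_ne_zero ha]

theorem Pm_finset_s14 (b : ℕ) (hb : 2 ≤ b) (m : ℕ) :
    ∃ F : Finset ℝ, Pm b m ⊆ ↑F ∧ F.card ≤ 2 * 3 ^ m := by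
  induction m with
  | zero =>
    refine ⟨{1 / ((b : ℝ) + 1), (2 * (b : ℝ) + 1) / ((b : ℝ) + 1)}, ?_, ?_⟩
    · intro x hx
      simpa [Pm, Eb] using hx
    · simpa using Finset.card_le_two
  | succ m ih =>
    obtain ⟨F, hF, hc⟩ := ih
    choose G hG hGc using fiber_bound b hb
    refine ⟨F.biUnion G, ?_, ?_⟩
    · intro x hx
      have h1 : Rb b x ∈ Pm b m := by
        simpa [Pm, Function.iterate_succ_apply] using hx
      exact Finset.mem_coe.2 (Finset.mem_biUnion.2 ⟨_, hF h1, hG _ x rfl⟩)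
    · refine (Finset.card_biUnion_le_card_mul F G 3 (fun x _ => hGc x)).trans ?_
      rw [pow_succ]
      omega

theorem dirac_sum_le (b : ℕ) (hb : 2 ≤ b) (m : ℕ) (A : Set ℝ) (hA : MeasurableSet A) :
    (Measure.sum fun lam : Pm b m => Measure.dirac (lam : ℝ)) A ≤
      ENNReal.ofReal (2 * 3 ^ m) := by
  obtain ⟨F, hF, hc⟩ := Pm_finset_s14 b hb m
  have hfin : (Pm b m).Finite := F.finite_toSet.subset hF
  have := hfin.fintype
  rw [Measure.sum_apply _ hA, tsum_fintype]
  calc ∑ i : Pm b m, (Measure.dirac (i : ℝ)) A ≤ ∑ i : Pm b m, 1 :=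
        Finset.sum_le_sum fun i _ => prob_le_one
    _ = ((Fintype.card (Pm b m) : ℕ) : ENNReal) := by simp
    _ ≤ ((2 * 3 ^ m : ℕ) : ENNReal) := by
        have h : Fintype.card (Pm b m) ≤ F.card := by
          rw [← Set.toFinset_card]
          exact Finset.card_le_card (by intro x hx; exact hF (by simpa using hx))
        exact_mod_cast h.trans hc
    _ = ENNReal.ofReal (2 * 3 ^ m) := by
        rw [← ENNReal.ofReal_natCast]; push_cast; rfl

/-- There is a constant `C` such that for every `ℓ ≥ 1` and every Borel set `A`,
`|ν_b(A) − ν_{ℓ,b}(A)| ≤ C·(3/(b+2))^ℓ`: the level-`ℓ` densities of states converge to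
`ν_b` in total variation at a geometric rate. -/
theorem nuLb_converges_total_variation (b : ℕ) (hb : 2 ≤ b) :
    ∃ C : ℝ, ∀ ℓ : ℕ, 1 ≤ ℓ → ∀ A : Set ℝ, MeasurableSet A →
      |(nub b A).toReal - (nuLb b ℓ A).toReal| ≤ C * (3 / ((b : ℝ) + 2)) ^ ℓ := by
  have hb2 : (2 : ℝ) ≤ b := by exact_mod_cast hb
  refine ⟨4, fun ℓ hℓ A hA => ?_⟩
  obtain ⟨B, hB⟩ : ∃ B : ℝ, B = (b : ℝ) + 2 := ⟨_, rfl⟩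
  have hbB : (b : ℝ) - 1 = B - 3 := by rw [hB]; ring
  have hB4 : 4 ≤ B := by linarith
  have hB0 : 0 < B := by linarith
  obtain ⟨c, hc⟩ : ∃ c : ℕ → ℝ, c = fun m =>
    ((Measure.sum fun lam : Pm b m => Measure.dirac (lam : ℝ)) A).toReal := ⟨_, rfl⟩
  have hc0 : ∀ m, 0 ≤ c m := fun m => by rw [hc]; exact ENNReal.toReal_nonneg
  have hcS : ∀ m, (Measure.sum fun lam : Pm b m => Measure.dirac (lam : ℝ)) A =
      ENNReal.ofReal (c m) := fun m => by
    rw [hc]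
    exact (ENNReal.ofReal_toReal
      (ne_top_of_le_ne_top ENNReal.ofReal_ne_top (dirac_sum_le b hb m A hA))).symm
  have hcle : ∀ m, c m ≤ 2 * 3 ^ m := fun m => by
    rw [hc]
    exact ENNReal.toReal_le_of_le_ofReal (by positivity) (dirac_sum_le b hb m A hA)
  let w : ℕ → ℝ := fun m => (B - 3) / (2 * B ^ (m + 1))
  let v : ℕ → ℝ := fun m => ((B - 3) * B ^ (ℓ - m - 1) + 2) / (2 * (B ^ ℓ - 1))
  have hBl : 4 ≤ B ^ ℓ := hB4.trans (le_self_pow₀ (by linarith) (by omega))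
  have hw0 : ∀ m, 0 ≤ w m := fun m => div_nonneg (by linarith) (by positivity)
  have hv0 : ∀ m, 0 ≤ v m := fun m => by
    have : 0 ≤ (B - 3) * B ^ (ℓ - m - 1) := mul_nonneg (by linarith) (by positivity)
    exact div_nonneg (by linarith) (by linarith)
  have hr0 : 0 ≤ 3 / B := by positivity
  have hr1 : 3 / B < 1 := by rw [div_lt_one hB0]; linarith
  have hwle : ∀ m, w m * c m ≤ (B - 3) / B * (3 / B) ^ m := fun m => by
    calc w m * c m ≤ w m * (2 * 3 ^ m) := mul_le_mul_of_nonneg_left (hcle m) (hw0 m)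
      _ = _ := by simp only [w]; rw [div_pow]; field_simp; ring
  have hgs : Summable fun m => (B - 3) / B * (3 / B) ^ m :=
    (summable_geometric_of_lt_one hr0 hr1).mul_left _
  have hwc0 : ∀ m, 0 ≤ w m * c m := fun m => mul_nonneg (hw0 m) (hc0 m)
  have hs : Summable fun m => w m * c m := Summable.of_nonneg_of_le hwc0 hwle hgs
  have h1 : (nub b A).toReal = ∑' m, w m * c m := by
    unfold nub
    rw [Measure.sum_apply _ hA]
    simp only [Measure.smul_apply, smul_eq_mul, hcS, ← hB, hbB]
    rw [← ENNReal.toReal_ofReal (tsum_nonneg hwc0), ENNReal.ofReal_tsum_of_nonneg hwc0 hs]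
    congr 2
    ext m
    rw [ENNReal.ofReal_mul (hw0 m)]
  have h2 : (nuLb b ℓ A).toReal = ∑ m ∈ Finset.range ℓ, v m * c m := by
    unfold nuLb
    rw [Measure.sum_apply _ hA, tsum_fintype]
    simp only [Measure.smul_apply, smul_eq_mul, hcS, ← hB, hbB]
    rw [Finset.sum_range, ENNReal.toReal_sum
      (fun a _ => ENNReal.mul_ne_top ENNReal.ofReal_ne_top ENNReal.ofReal_ne_top)]
    refine Finset.sum_congr rfl fun m _ => ?_
    rw [ENNReal.toReal_mul, ENNReal.toReal_ofReal (hc0 _)]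
    congr 1
    exact ENNReal.toReal_ofReal (hv0 m)
  rw [h1, h2, ← hs.sum_add_tsum_nat_add ℓ, ← hB]
  have htail : ∑' m, w (m + ℓ) * c (m + ℓ) ≤ (3 / B) ^ ℓ := by
    have hle : ∑' m, w (m + ℓ) * c (m + ℓ) ≤ ∑' m, (B - 3) / B * (3 / B) ^ (m + ℓ) :=
      ((summable_nat_add_iff ℓ).2 hs).tsum_le_tsum (fun m => hwle (m + ℓ))
        ((summable_nat_add_iff ℓ).2 hgs)
    refine hle.trans (le_of_eq ?_)
    simp only [pow_add]
    rw [tsum_mul_left, tsum_mul_right, tsum_geometric_of_lt_one hr0 hr1]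
    have : B - 3 ≠ 0 := by linarith
    have h3 : 1 - 3 / B = (B - 3) / B := by field_simp
    rw [h3, ← mul_assoc, mul_inv_cancel₀ (by positivity), one_mul]
  have htail0 : 0 ≤ ∑' m, w (m + ℓ) * c (m + ℓ) := tsum_nonneg fun m => hwc0 _
  have hdiff : ∀ m ∈ Finset.range ℓ, 0 ≤ v m - w m ∧ v m - w m ≤ 3 / B ^ ℓ := by
    intro m hm
    have hm' : m < ℓ := Finset.mem_range.1 hm
    have hpow : B ^ ℓ = B ^ (ℓ - m - 1) * B ^ (m + 1) := by
      rw [← pow_add]; congr 1; omega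
    have hne : B ^ ℓ - 1 ≠ 0 := by linarith
    have he : v m - w m = (2 + (B - 3) / B ^ (m + 1)) / (2 * (B ^ ℓ - 1)) := by
      simp only [v, w]
      have hq : B ^ (ℓ - m - 1) = B ^ ℓ / B ^ (m + 1) := by
        rw [hpow]; field_simp
      rw [hq]
      field_simp
      ring
    have hp0 : 0 ≤ (B - 3) / B ^ (m + 1) := div_nonneg (by linarith) (by positivity)
    have hp1 : (B - 3) / B ^ (m + 1) ≤ 1 := by
      rw [div_le_one (by positivity)]
      have := le_self_pow₀ (show 1 ≤ B by linarith) (show m + 1 ≠ 0 by omega)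
      linarith
    rw [he]
    refine ⟨div_nonneg (by linarith) (by linarith), ?_⟩
    exact div_le_div₀ (by norm_num) (by linarith) (by linarith) (by linarith)
  have hsum0 : 0 ≤ ∑ m ∈ Finset.range ℓ, (v m - w m) * c m :=
    Finset.sum_nonneg fun m hm => mul_nonneg (hdiff m hm).1 (hc0 m)
  have hsum1 : ∑ m ∈ Finset.range ℓ, (v m - w m) * c m ≤ 3 * (3 / B) ^ ℓ := by
    calc ∑ m ∈ Finset.range ℓ, (v m - w m) * c m
        ≤ ∑ m ∈ Finset.range ℓ, 3 / B ^ ℓ * (2 * 3 ^ m) :=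
          Finset.sum_le_sum fun m hm =>
            mul_le_mul (hdiff m hm).2 (hcle m) (hc0 m) (by positivity)
      _ = 3 / B ^ ℓ * (3 ^ ℓ - 1) := by
          rw [← Finset.mul_sum, ← Finset.mul_sum, geom_sum_eq (by norm_num)]
          ring
      _ ≤ 3 / B ^ ℓ * 3 ^ ℓ := mul_le_mul_of_nonneg_left (by linarith) (by positivity)
      _ = 3 * (3 / B) ^ ℓ := by rw [div_pow]; ring
  have hsplit : ∑ m ∈ Finset.range ℓ, (v m - w m) * c m =
      ∑ m ∈ Finset.range ℓ, v m * c m - ∑ m ∈ Finset.range ℓ, w m * c m := by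
    rw [← Finset.sum_sub_distrib]
    exact Finset.sum_congr rfl fun m _ => by ring
  have hrl : 0 ≤ (3 / B) ^ ℓ := by positivity
  rw [abs_le]
  constructor <;> linarith
end

section
/- The set J_b is a compact subset of [0,2], it is disjoint from both level-one gap intervals E_1^0 and E_1^1, it is totally disconnected, and it has Lebesgue measure zero. -/
open Set MeasureTheory

/-- `J_b`, the closure of `⋃_{m≥0} P_m`: the Julia set of `R_b`, which equals the
spectrum of the probabilistic Laplacian on the infinite bubble-diamond graph. -/
noncomputable def Jb (b : ℕ) : Set ℝ := closure (⋃ m : ℕ, Pm b m)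


/-- Points whose whole forward orbit stays in `[0,2]`. -/
def Kb (b : ℕ) : Set ℝ := {x : ℝ | ∀ n : ℕ, (Rb b)^[n] x ∈ Icc (0 : ℝ) 2}

/-- derivative of `Rb`. -/
noncomputable def Rd (b : ℕ) (z : ℝ) : ℝ :=
  (3 * ((b : ℝ) + 1) ^ 2 * (z - 1) ^ 2 - ((b : ℝ) ^ 2 + b + 1)) / b

lemma Rb_eq (b : ℕ) (hb : 2 ≤ b) (z : ℝ) :
    Rb b z = 1 + (((b : ℝ) + 1) ^ 2 * (z - 1) ^ 3 - ((b : ℝ) ^ 2 + b + 1) * (z - 1)) / b := by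
  have h : (b : ℝ) ≠ 0 := by positivity
  unfold Rb
  field_simp
  ring

lemma Rb_deriv (b : ℕ) (hb : 2 ≤ b) (z : ℝ) : HasDerivAt (Rb b) (Rd b z) z := by
  have e : Rb b = fun z => 1 + (((b : ℝ) + 1) ^ 2 * (z - 1) ^ 3
      - ((b : ℝ) ^ 2 + b + 1) * (z - 1)) / b := funext (Rb_eq b hb)
  rw [e]
  have h1 : HasDerivAt (fun z : ℝ => z - 1) 1 z := (hasDerivAt_id z).sub_const 1
  have h2 := ((((h1.pow 3).const_mul (((b : ℝ) + 1) ^ 2)).sub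
    (h1.const_mul ((b : ℝ) ^ 2 + b + 1))).div_const (b : ℝ)).const_add 1
  have e2 : Rd b z = (((b : ℝ) + 1) ^ 2 * (((3 : ℕ) : ℝ) * (z - 1) ^ (3 - 1) * 1)
      - ((b : ℝ) ^ 2 + b + 1) * 1) / b := by
    unfold Rd
    norm_num
    ring
  rw [e2]
  exact h2

lemma Rb_out (b : ℕ) (hb : 2 ≤ b) (z : ℝ) (hz : z ∉ Icc (0 : ℝ) 2) :
    Rb b z ∉ Icc (0 : ℝ) 2 := by
  have hB : (2 : ℝ) ≤ b := by exact_mod_cast hb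
  have h0 : (0 : ℝ) < b := by linarith
  have key : b * Rb b z = z * (((b : ℝ) + 1) * z - (2 * (b : ℝ) + 1)) *
    (((b : ℝ) + 1) * z - ((b : ℝ) + 2)) := by
    unfold Rb; field_simp
  intro h
  apply hz
  constructor
  · by_contra hc
    push Not at hc
    have p1 : 0 < -(((b : ℝ) + 1) * z - (2 * (b : ℝ) + 1)) := by nlinarith
    have p2 : 0 < -(((b : ℝ) + 1) * z - ((b : ℝ) + 2)) := by nlinarith
    have := mul_pos (mul_pos (neg_pos.2 hc) p1) p2
    have := mul_nonneg h0.le h.1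
    nlinarith
  · by_contra hc
    push Not at hc
    have p1 : 1 < (((b : ℝ) + 1) * z - (2 * (b : ℝ) + 1)) := by nlinarith
    have p2 : b < (((b : ℝ) + 1) * z - ((b : ℝ) + 2)) := by nlinarith
    have q1 : 2 < z * (((b : ℝ) + 1) * z - (2 * (b : ℝ) + 1)) := by nlinarith
    have q2 : 2 * b < z * (((b : ℝ) + 1) * z - (2 * (b : ℝ) + 1)) *
      (((b : ℝ) + 1) * z - ((b : ℝ) + 2)) := by nlinarith
    have := mul_le_mul_of_nonneg_left h.2 h0.le
    linarith

lemma Rb_out_iter (b : ℕ) (hb : 2 ≤ b) (n : ℕ) (z : ℝ) (hz : z ∉ Icc (0 : ℝ) 2) :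
    (Rb b)^[n] z ∉ Icc (0 : ℝ) 2 := by
  induction n with
  | zero => simpa using hz
  | succ k ih =>
    rw [Function.iterate_succ_apply']
    exact Rb_out b hb _ ih

lemma Kb_closed (b : ℕ) : IsClosed (Kb b) := by
  have : Kb b = ⋂ n : ℕ, (Rb b)^[n] ⁻¹' Icc (0 : ℝ) 2 := by
    ext x; simp [Kb]
  rw [this]
  exact isClosed_iInter fun n => isClosed_Icc.preimage ((Rb_cont b).iterate n)

lemma Kb_map (b : ℕ) (x : ℝ) (hx : x ∈ Kb b) : Rb b x ∈ Kb b := by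
  intro n
  have := hx (n + 1)
  rwa [Function.iterate_succ_apply] at this

lemma Eb_sub (b : ℕ) (hb : 2 ≤ b) : Eb b ⊆ Kb b := by
  have hB : (2 : ℝ) ≤ b := by exact_mod_cast hb
  have h0 : (0 : ℝ) < b := by linarith
  have r0 : Rb b 0 = 0 := by simp [Rb]
  have r2 : Rb b 2 = 2 := by
    unfold Rb; field_simp; ring
  have i0 : ∀ n, (Rb b)^[n] 0 = 0 := fun n => Function.iterate_fixed r0 n
  have i2 : ∀ n, (Rb b)^[n] 2 = 2 := fun n => Function.iterate_fixed r2 n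
  intro x hx n
  rcases hx with rfl | hx
  · cases n with
    | zero =>
      constructor
      · simp only [Function.iterate_zero, id]; positivity
      · simp only [Function.iterate_zero, id]
        rw [div_le_iff₀ (by positivity)]; linarith
    | succ k =>
      have : Rb b (1 / ((b : ℝ) + 1)) = 2 := by
        unfold Rb; field_simp; ring
      rw [Function.iterate_succ_apply, this, i2]
      norm_num
  · rw [mem_singleton_iff] at hx
    subst hx
    cases n with
    | zero =>
      constructor
      · simp only [Function.iterate_zero, id]; positivity
      · simp only [Function.iterate_zero, id]
        rw [div_le_iff₀ (by positivity)]; linarith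
    | succ k =>
      have : Rb b ((2 * (b : ℝ) + 1) / ((b : ℝ) + 1)) = 0 := by
        unfold Rb; field_simp; ring
      rw [Function.iterate_succ_apply, this, i0]
      norm_num

lemma Jb_sub (b : ℕ) (hb : 2 ≤ b) : Jb b ⊆ Kb b := by
  apply closure_minimal _ (Kb_closed b)
  apply iUnion_subset
  intro m x hx n
  have hE : (Rb b)^[m] x ∈ Kb b := Eb_sub b hb hx
  by_contra hc
  have := Rb_out_iter b hb m _ hc
  apply this
  rw [← Function.iterate_add_apply, add_comm, Nat.add_comm, Nat.add_comm,
    Function.iterate_add_apply]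
  exact hE n

lemma Kb_icc (b : ℕ) (x : ℝ) (hx : x ∈ Kb b) : x ∈ Icc (0 : ℝ) 2 := hx 0

lemma gap0 (b : ℕ) (hb : 2 ≤ b) (x : ℝ)
    (hx : x ∈ Ioo (1 / ((b : ℝ) + 1)) ((b : ℝ) / ((b : ℝ) + 1))) : x ∉ Kb b := by
  have hB : (2 : ℝ) ≤ b := by exact_mod_cast hb
  have h0 : (0 : ℝ) < b := by linarith
  obtain ⟨h1, h2⟩ := hx
  rw [div_lt_iff₀ (by positivity)] at h1
  rw [lt_div_iff₀ (by positivity)] at h2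
  intro h
  have h3 := (Kb_map b x h 0).2
  simp only [Function.iterate_zero, id] at h3
  have key : b * (Rb b x - 2) = (x - 2) * ((x * (b + 1) - 1) * (x * (b + 1) - b)) := by
    unfold Rb; field_simp; ring
  have p := mul_pos (sub_pos.2 h1) (sub_pos.2 h2)
  have hx2 : x < 2 := by nlinarith
  have p2 := mul_pos (sub_pos.2 hx2) p
  nlinarith

lemma gap1 (b : ℕ) (hb : 2 ≤ b) (x : ℝ)
    (hx : x ∈ Ioo (((b : ℝ) + 2) / ((b : ℝ) + 1)) ((2 * (b : ℝ) + 1) / ((b : ℝ) + 1))) :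
    x ∉ Kb b := by
  have hB : (2 : ℝ) ≤ b := by exact_mod_cast hb
  have h0 : (0 : ℝ) < b := by linarith
  obtain ⟨h1, h2⟩ := hx
  rw [div_lt_iff₀ (by positivity)] at h1
  rw [lt_div_iff₀ (by positivity)] at h2
  intro h
  have h3 := (Kb_map b x h 0).1
  simp only [Function.iterate_zero, id] at h3
  have key : b * Rb b x = x * ((x * (b + 1) - (b + 2)) * (x * (b + 1) - (2 * b + 1))) := by
    unfold Rb; field_simp
  have p := mul_pos (sub_pos.2 h1) (sub_pos.2 h2)
  have hx2 : 0 < x := by nlinarith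
  have p2 := mul_pos hx2 p
  nlinarith

/-- The three pieces, in terms of `w = (b+1)(z-1)`. -/
def piece (b : ℕ) : Fin 3 → Set ℝ
  | 0 => {z | z ∈ Kb b ∧ (b + 1) * (z - 1) ≤ -(b : ℝ)}
  | 1 => {z | z ∈ Kb b ∧ -1 ≤ (b + 1) * (z - 1) ∧ (b + 1) * (z - 1) ≤ (1 : ℝ)}
  | 2 => {z | z ∈ Kb b ∧ (b : ℝ) ≤ (b + 1) * (z - 1)}

lemma Kb_cover (b : ℕ) (hb : 2 ≤ b) : Kb b ⊆ piece b 0 ∪ piece b 1 ∪ piece b 2 := by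
  have hB : (2 : ℝ) ≤ b := by exact_mod_cast hb
  have h0 : (0 : ℝ) < b := by linarith
  intro x hx
  have g0 : ¬ _ := fun h => gap0 b hb x h hx
  have g1 : ¬ _ := fun h => gap1 b hb x h hx
  rw [mem_Ioo, not_and, not_lt, div_lt_iff₀ (by positivity), div_le_iff₀ (by positivity)] at g0 g1
  by_cases c0 : (b + 1) * (x - 1) ≤ -(b : ℝ)
  · exact Or.inl (Or.inl ⟨hx, c0⟩)
  · by_cases c1 : (b + 1) * (x - 1) ≤ (1 : ℝ)
    · have := g0 (by linarith)
      exact Or.inl (Or.inr ⟨hx, by linarith, c1⟩)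
    · have := g1 (by linarith)
      exact Or.inr ⟨hx, by linarith⟩

lemma piece_sub (b : ℕ) (i : Fin 3) : piece b i ⊆ Kb b := by
  fin_cases i <;> exact fun x hx => hx.1

lemma piece_meas (b : ℕ) (i : Fin 3) : MeasurableSet (piece b i) := by
  apply IsClosed.measurableSet
  have hK := Kb_closed b
  have hc : Continuous fun z : ℝ => ((b : ℝ) + 1) * (z - 1) := by fun_prop
  fin_cases i
  · exact hK.inter (isClosed_le hc continuous_const)
  · exact hK.inter ((isClosed_le continuous_const hc).inter (isClosed_le hc continuous_const))
  · exact hK.inter (isClosed_le continuous_const hc)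

lemma piece_inj (b : ℕ) (hb : 2 ≤ b) (i : Fin 3) : InjOn (Rb b) (piece b i) := by
  have hB : (2 : ℝ) ≤ b := by exact_mod_cast hb
  have h0 : (0 : ℝ) < b := by linarith
  intro x hx y hy hxy
  by_contra hne
  have hne' : x - y ≠ 0 := sub_ne_zero.2 hne
  rw [Rb_eq b hb, Rb_eq b hb] at hxy
  field_simp at hxy
  set u := ((b : ℝ) + 1) * (x - 1) with hu
  set v := ((b : ℝ) + 1) * (y - 1) with hv
  have key : u ^ 2 + u * v + v ^ 2 = (b : ℝ) ^ 2 + b + 1 := by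
    apply mul_left_cancel₀ hne'
    rw [hu, hv]
    linear_combination hxy
  fin_cases i
  · have h1 : u ≤ -(b : ℝ) := hx.2
    have h2 : v ≤ -(b : ℝ) := hy.2
    nlinarith [mul_nonneg (sub_nonneg.2 h1) (sub_nonneg.2 h2)]
  · have h1 : -1 ≤ u ∧ u ≤ 1 := hx.2
    have h2 : -1 ≤ v ∧ v ≤ 1 := hy.2
    nlinarith [sq_nonneg (u - v)]
  · have h1 : (b : ℝ) ≤ u := hx.2
    have h2 : (b : ℝ) ≤ v := hy.2
    nlinarith [mul_nonneg (sub_nonneg.2 h1) (sub_nonneg.2 h2)]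

lemma piece_sq (b : ℕ) (hb : 2 ≤ b) (i : Fin 3) (z : ℝ) (hz : z ∈ piece b i) :
    ((b : ℝ) + 1) ^ 2 * (z - 1) ^ 2 ≤ 1 ∨ (b : ℝ) ^ 2 ≤ ((b : ℝ) + 1) ^ 2 * (z - 1) ^ 2 := by
  have hB : (2 : ℝ) ≤ b := by exact_mod_cast hb
  rw [← mul_pow]
  fin_cases i
  · right
    have h : (b + 1) * (z - 1) ≤ -(b : ℝ) := hz.2
    nlinarith
  · left
    have h : -1 ≤ (b + 1) * (z - 1) ∧ (b + 1) * (z - 1) ≤ (1 : ℝ) := hz.2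
    nlinarith
  · right
    have h : (b : ℝ) ≤ (b + 1) * (z - 1) := hz.2
    nlinarith

/-- Weight: constant for `b ≥ 3`, quadratic for `b = 2`. -/
noncomputable def wt (b : ℕ) (z : ℝ) : ℝ := if b = 2 then 1 + (z - 1) ^ 2 else 1

lemma wt_ge (b : ℕ) (z : ℝ) : 1 ≤ wt b z := by
  unfold wt; split_ifs
  · nlinarith [sq_nonneg (z - 1)]
  · exact le_rfl

lemma wt_le (b : ℕ) (z : ℝ) (hz : z ∈ Icc (0 : ℝ) 2) : wt b z ≤ 2 := by
  unfold wt; split_ifs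
  · nlinarith [hz.1, hz.2]
  · norm_num

lemma wt_ineq (b : ℕ) (hb : 2 ≤ b) (i : Fin 3) (z : ℝ) (hz : z ∈ piece b i) :
    wt b z ≤ 3 / 10 * (|Rd b z| * wt b (Rb b z)) := by
  have hs := piece_sq b hb i z hz
  have hI := Kb_icc b z (piece_sub b i hz)
  have hu0 : 0 ≤ (z - 1) ^ 2 := sq_nonneg _
  have hu1 : (z - 1) ^ 2 ≤ 1 := by nlinarith [hI.1, hI.2]
  unfold wt
  split_ifs with h
  · subst h
    have e : (Rb 2 z - 1) ^ 2 = (z - 1) ^ 2 * (9 * (z - 1) ^ 2 - 7) ^ 2 / 4 := by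
      rw [Rb_eq 2 hb]; push_cast; ring
    have ed : Rd 2 z = (27 * (z - 1) ^ 2 - 7) / 2 := by
      unfold Rd; push_cast; ring
    rw [e, ed]
    push_cast at hs
    generalize (z - 1) ^ 2 = u at *
    rcases hs with hs | hs
    · have h9 : u ≤ 1 / 9 := by linarith
      rw [abs_of_nonpos (by linarith)]
      have q : 0 ≤ u * (1 / 9 - u) := mul_nonneg hu0 (by linarith)
      have q2 : 36 * u ≤ u * (9 * u - 7) ^ 2 := by nlinarith
      nlinarith
    · have h9 : 4 / 9 ≤ u := by linarith
      rw [abs_of_nonneg (by linarith)]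
      have q : 0 ≤ u * (9 * u - 7) ^ 2 := by positivity
      by_cases c : 7 / 10 ≤ u
      · nlinarith
      · push Not at c
        obtain ⟨s, rfl⟩ : ∃ s, u = s + 4 / 9 := ⟨u - 4 / 9, by ring⟩
        have s0 : 0 ≤ s := by linarith
        have s1 : s ≤ 1 / 3 := by linarith
        have e1 := mul_nonneg s0 (sub_nonneg.2 s1)
        have e2 := mul_nonneg s0 e1
        have e3 := mul_nonneg s0 e2
        have e4 : 0 ≤ s ^ 4 := by positivity
        have e5 : 0 ≤ s ^ 3 := by positivity
        have e6 : 0 ≤ s * (1 / 3 - s) ^ 2 := by positivity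
        have e7 : 0 ≤ s ^ 2 * (1 / 3 - s) ^ 2 := by positivity
        have e8 : 0 ≤ s * (1 / 4 - s) ^ 2 := by positivity
        nlinarith
  · have hb3 : 3 ≤ b := by omega
    have hB : (3 : ℝ) ≤ b := by exact_mod_cast hb3
    have h0 : (0 : ℝ) < b := by linarith
    have : 10 / 3 ≤ |Rd b z| := by
      rw [le_abs]
      unfold Rd
      rw [le_div_iff₀ h0, ← neg_div, le_div_iff₀ h0]
      rcases hs with hs | hs
      · right; nlinarith
      · left; nlinarith
    linarith

lemma piece_int (b : ℕ) (hb : 2 ≤ b) (i : Fin 3) :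
    ∫⁻ z in piece b i, ENNReal.ofReal (wt b z) ≤
      ENNReal.ofReal (3 / 10) * ∫⁻ z in Kb b, ENNReal.ofReal (wt b z) := by
  have hcv := lintegral_image_eq_lintegral_abs_deriv_mul (piece_meas b i)
    (fun x _ => (Rb_deriv b hb x).hasDerivWithinAt) (piece_inj b hb i)
    (fun z => ENNReal.ofReal (wt b z))
  calc ∫⁻ z in piece b i, ENNReal.ofReal (wt b z)
      ≤ ∫⁻ z in piece b i, ENNReal.ofReal (3 / 10) *
          (ENNReal.ofReal |Rd b z| * ENNReal.ofReal (wt b (Rb b z))) := by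
        apply setLIntegral_mono' (piece_meas b i)
        intro z hz
        rw [← ENNReal.ofReal_mul (abs_nonneg _), ← ENNReal.ofReal_mul (by norm_num)]
        exact ENNReal.ofReal_le_ofReal (wt_ineq b hb i z hz)
    _ = ENNReal.ofReal (3 / 10) * ∫⁻ z in Rb b '' piece b i, ENNReal.ofReal (wt b z) := by
        rw [hcv, lintegral_const_mul' _ _ ENNReal.ofReal_ne_top]
    _ ≤ _ := by
        gcongr
        rintro _ ⟨x, hx, rfl⟩
        exact Kb_map b x (piece_sub b i hx)

lemma Kb_vol (b : ℕ) (hb : 2 ≤ b) : volume (Kb b) = 0 := by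
  set V := ∫⁻ z in Kb b, ENNReal.ofReal (wt b z) with hV
  have hle : volume (Kb b) ≤ V := by
    calc volume (Kb b) = ∫⁻ z in Kb b, 1 := by simp
      _ ≤ V := by
        apply lintegral_mono
        intro z
        simpa using ENNReal.ofReal_le_ofReal (wt_ge b z)
  have hfin : V ≠ ⊤ := by
    apply ne_top_of_le_ne_top (b := ∫⁻ z in Kb b, ENNReal.ofReal 2)
    · rw [setLIntegral_const]
      apply ENNReal.mul_ne_top ENNReal.ofReal_ne_top
      apply ne_top_of_le_ne_top _ (measure_mono (fun x hx => Kb_icc b x hx))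
      simp
    · apply setLIntegral_mono' (Kb_closed b).measurableSet
      intro z hz
      exact ENNReal.ofReal_le_ofReal (wt_le b z (Kb_icc b z hz))
  have hmain : V ≤ ENNReal.ofReal (9 / 10) * V := by
    calc V ≤ ∫⁻ z in piece b 0 ∪ piece b 1 ∪ piece b 2, ENNReal.ofReal (wt b z) :=
          lintegral_mono_set (Kb_cover b hb)
      _ ≤ (∫⁻ z in piece b 0 ∪ piece b 1, ENNReal.ofReal (wt b z)) +
            ∫⁻ z in piece b 2, ENNReal.ofReal (wt b z) := lintegral_union_le _ _ _
      _ ≤ (∫⁻ z in piece b 0, ENNReal.ofReal (wt b z)) +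
            (∫⁻ z in piece b 1, ENNReal.ofReal (wt b z)) +
            ∫⁻ z in piece b 2, ENNReal.ofReal (wt b z) := by
          gcongr; exact lintegral_union_le _ _ _
      _ ≤ ENNReal.ofReal (3 / 10) * V + ENNReal.ofReal (3 / 10) * V
            + ENNReal.ofReal (3 / 10) * V := by
          gcongr <;> exact piece_int b hb _
      _ = ENNReal.ofReal (9 / 10) * V := by
          rw [← add_mul, ← add_mul, ← ENNReal.ofReal_add (by norm_num) (by norm_num),
            ← ENNReal.ofReal_add (by norm_num) (by norm_num)]
          norm_num
  have hV0 : V = 0 := by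
    have h := ENNReal.toReal_mono (ENNReal.mul_ne_top ENNReal.ofReal_ne_top hfin) hmain
    rw [ENNReal.toReal_mul, ENNReal.toReal_ofReal (by norm_num)] at h
    have hn := ENNReal.toReal_nonneg (a := V)
    have : V.toReal = 0 := by linarith
    exact ((ENNReal.toReal_eq_zero_iff V).1 this).resolve_right hfin
  exact le_antisymm (hle.trans hV0.le) bot_le

lemma totDisc_of_null (s : Set ℝ) (hs : volume s = 0) : IsTotallyDisconnected s := by
  have aux : ∀ t ⊆ s, IsPreconnected t → ∀ x ∈ t, ∀ y ∈ t, ¬ x < y := by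
    intro t ht hc x hx y hy hlt
    have h1 : Icc x y ⊆ s := (hc.ordConnected.out hx hy).trans ht
    have h2 := measure_mono_null h1 hs
    rw [Real.volume_Icc, ENNReal.ofReal_eq_zero] at h2
    linarith
  intro t ht hc x hx y hy
  exact le_antisymm (not_lt.1 (aux t ht hc y hy x hx)) (not_lt.1 (aux t ht hc x hx y hy))

/-- `J_b` is a compact subset of `[0,2]`, disjoint from both level-one gap intervals
`E₁⁰ = (1/(b+1), b/(b+1))` and `E₁¹ = ((b+2)/(b+1), (2b+1)/(b+1))`, totally
disconnected, and of Lebesgue measure zero. -/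
theorem Julia_set_structure (b : ℕ) (hb : 2 ≤ b) :
    IsCompact (Jb b) ∧
    Jb b ⊆ Icc (0 : ℝ) 2 ∧
    Disjoint (Jb b) (Ioo (1 / ((b : ℝ) + 1)) ((b : ℝ) / ((b : ℝ) + 1))) ∧
    Disjoint (Jb b)
      (Ioo (((b : ℝ) + 2) / ((b : ℝ) + 1)) ((2 * (b : ℝ) + 1) / ((b : ℝ) + 1))) ∧
    IsTotallyDisconnected (Jb b) ∧
    volume (Jb b) = 0 := by
  have hsub := Jb_sub b hb
  have hicc : Jb b ⊆ Icc (0 : ℝ) 2 := fun x hx => Kb_icc b x (hsub hx)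
  have hvol : volume (Jb b) = 0 := measure_mono_null hsub (Kb_vol b hb)
  refine ⟨isCompact_Icc.of_isClosed_subset isClosed_closure hicc, hicc, ?_, ?_,
    totDisc_of_null _ hvol, hvol⟩
  · exact Set.disjoint_left.2 fun x hx h => gap0 b hb x h (hsub hx)
  · exact Set.disjoint_left.2 fun x hx h => gap1 b hb x h (hsub hx)
end
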